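/- Let (Q,+) be a loop, let φ and ψ be automorphisms of (Q,+), let c be an element of Z(Q), and let (Q,*) be the affine quasigroup with x*y = (φ(x)+ψ(y))+c. Then (Q,*) is medial if and only if the operation + is commutative and associative (so that (Q,+) is an abelian group) and φ∘ψ = ψ∘φ. -/

import Mathlib

/-- A loop: a quasigroup with a two-sided neutral element. -/
structure Loop (Q : Type) where
  add : Q → Q → Q
  zero : Q
  addLeftBij : ∀ x, Function.Bijective fun y => add x y
  addRightBij : ∀ x, Function.Bijective fun y => add y x
  zero_add : ∀ x, add zero x = x
  add_zero : ∀ x, add x zero = x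

namespace Loop

/-- The center of a loop: elements commuting and associating with everything. -/
def center {Q : Type} (L : Loop Q) : Set Q :=
  {z | (∀ x, L.add z x = L.add x z) ∧
       (∀ x y, L.add z (L.add x y) = L.add (L.add z x) y) ∧
       (∀ x y, L.add x (L.add z y) = L.add (L.add x z) y) ∧
       (∀ x y, L.add x (L.add y z) = L.add (L.add x y) z)}

/-- A map `α` is central if `Z(Q) + α(x) = Z(Q) + x` for every `x`. -/
def IsCentral {Q : Type} (L : Loop Q) (α : Q → Q) : Prop :=
  ∀ x, (fun z => L.add z (α x)) '' L.center = (fun z => L.add z x) '' L.center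

/-- Automorphism of a loop: a bijective map respecting the operation. -/
def IsAut {Q : Type} (L : Loop Q) (f : Q → Q) : Prop :=
  Function.Bijective f ∧ ∀ x y, f (L.add x y) = L.add (f x) (f y)

/-- `neg` provides two-sided inverses for the loop. -/
def IsTwoSidedInv {Q : Type} (L : Loop Q) (neg : Q → Q) : Prop :=
  ∀ x, L.add x (neg x) = L.zero ∧ L.add (neg x) x = L.zero

/-- Commutative Moufang loop: commutative and satisfying the Moufang identity. -/
def IsCommMoufang {Q : Type} (L : Loop Q) : Prop :=
  (∀ x y, L.add x y = L.add y x) ∧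
  (∀ x y z, L.add x (L.add y (L.add x z)) = L.add (L.add (L.add x y) x) z)

end Loop

/-!
Cancelling the outer `c`, mediality of `x * y = (φ x + ψ y) + c` says that `y` and `u` may be
exchanged in `((a + φ (ψ y)) + φ c) + ((ψ (φ u) + d) + ψ c)`, where `a` and `d` are arbitrary
because `φ` and `ψ` are onto. The case `u = 0` moves `y` from one summand to the other; after
eliminating `ψ (φ y)` by means of the `a` with `a + φ c = 0`, it becomes associativity.
The case `u = a = d = 0` then gives `φ (ψ y) + φ c = φ c + ψ (φ y)`, and substituting this into
the exchange law gives commutativity, whence `φ (ψ y) = ψ (φ y)`.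
-/

/-- Mediality (the entropic law) of a binary operation, which need not be a quasigroup. -/
def IsMedial {Q : Type*} (op : Q → Q → Q) : Prop :=
  ∀ x y u v, op (op x y) (op u v) = op (op x u) (op y v)

namespace Loop

variable {Q : Type} {L : Loop Q}

theorem add_left_cancel {x y z : Q} (h : L.add x y = L.add x z) : y = z :=
  (L.addLeftBij x).1 h

theorem add_right_cancel {x y z : Q} (h : L.add x z = L.add y z) : x = y :=
  (L.addRightBij z).1 h

theorem map_zero_of_map_add {f : Q → Q} (hf : ∀ x y, f (L.add x y) = L.add (f x) (f y)) :
    f L.zero = L.zero :=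
  add_left_cancel (x := f L.zero) <| by rw [← hf, L.add_zero, L.add_zero]

variable (L) in
/-- The operation `x * y = (φ x + ψ y) + c` of an affine quasigroup, for arbitrary maps `φ`, `ψ`
and an arbitrary element `c`. -/
def affine (φ ψ : Q → Q) (c : Q) : Q → Q → Q :=
  fun x y => L.add (L.add (φ x) (ψ y)) c

variable (L) in
/-- The law allowing `y` and `u` to be exchanged in `((a + f y) + p) + ((g u + d) + q)`. With
`f = φ ∘ ψ`, `g = ψ ∘ φ`, `p = φ c`, `q = ψ c` it expresses mediality of `L.affine φ ψ c`. -/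
def Exchange (f g : Q → Q) (p q : Q) : Prop :=
  ∀ a y u d,
    L.add (L.add (L.add a (f y)) p) (L.add (L.add (g u) d) q) =
      L.add (L.add (L.add a (f u)) p) (L.add (L.add (g y) d) q)

theorem isMedial_affine_iff_exchange {φ ψ : Q → Q}
    (hφ : ∀ x y, φ (L.add x y) = L.add (φ x) (φ y)) (hφs : φ.Surjective)
    (hψ : ∀ x y, ψ (L.add x y) = L.add (ψ x) (ψ y)) (hψs : ψ.Surjective) (c : Q) :
    IsMedial (L.affine φ ψ c) ↔ L.Exchange (φ ∘ ψ) (ψ ∘ φ) (φ c) (ψ c) := by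
  simp only [IsMedial, affine, hφ, hψ]
  constructor
  · intro h a y u d
    obtain ⟨x, rfl⟩ := (hφs.comp hφs) a
    obtain ⟨v, rfl⟩ := (hψs.comp hψs) d
    exact add_right_cancel (h x y u v)
  · intro h x y u v
    exact congrArg (L.add · c) (h (φ (φ x)) y u (ψ (ψ v)))

namespace Exchange

variable {f g : Q → Q} {p q : Q}

theorem add_assoc (h : L.Exchange f g p q) (hf : f.Surjective) (hf₀ : f L.zero = L.zero)
    (hg₀ : g L.zero = L.zero) (x y z : Q) : L.add (L.add x y) z = L.add x (L.add y z) := by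
  have exchange_zero (a s d : Q) : L.add (L.add (L.add a (f s)) p) (L.add d q) =
      L.add (L.add a p) (L.add (L.add (g s) d) q) := by
    simpa only [hf₀, hg₀, L.zero_add, L.add_zero] using h a s L.zero d
  obtain ⟨a₀, ha₀ : L.add a₀ p = L.zero⟩ := (L.addRightBij p).2 L.zero
  have eliminate_g (s d : Q) :
      L.add (L.add (L.add a₀ (f s)) p) (L.add d q) = L.add (L.add (g s) d) q := by
    rw [exchange_zero, ha₀, L.zero_add]
  have absorb (a s z : Q) : L.add (L.add (L.add a (f s)) p) z =
      L.add (L.add a p) (L.add (L.add (L.add a₀ (f s)) p) z) := by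
    obtain ⟨d, rfl⟩ := (L.addRightBij q).2 z
    rw [exchange_zero, eliminate_g]
  obtain ⟨a, rfl⟩ := (L.addRightBij p).2 x
  obtain ⟨s, rfl⟩ := (((L.addRightBij p).2.comp (L.addLeftBij a₀).2).comp hf) y
  have absorb_zero := absorb a s L.zero
  rw [L.add_zero, L.add_zero] at absorb_zero
  calc
    L.add (L.add (L.add a p) (L.add (L.add a₀ (f s)) p)) z
      = L.add (L.add (L.add a (f s)) p) z := by rw [absorb_zero]
    _ = L.add (L.add a p) (L.add (L.add (L.add a₀ (f s)) p) z) := absorb a s z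

theorem map_add_eq_add_map (h : L.Exchange f g p q)
    (assoc : ∀ x y z, L.add (L.add x y) z = L.add x (L.add y z))
    (hf₀ : f L.zero = L.zero) (hg₀ : g L.zero = L.zero) (y : Q) :
    L.add (f y) p = L.add p (g y) := by
  apply add_right_cancel (z := q)
  simpa only [hf₀, hg₀, L.zero_add, L.add_zero, ← assoc] using h L.zero y L.zero L.zero

theorem add_comm (h : L.Exchange f g p q)
    (assoc : ∀ x y z, L.add (L.add x y) z = L.add x (L.add y z))
    (hf : f.Surjective) (hf₀ : f L.zero = L.zero) (hg₀ : g L.zero = L.zero) (x y : Q) :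
    L.add x y = L.add y x := by
  have move_p (s t : Q) : L.add (L.add (f s) p) (g t) = L.add (L.add (f s) (f t)) p := by
    rw [assoc, ← h.map_add_eq_add_map assoc hf₀ hg₀, assoc]
  obtain ⟨s, rfl⟩ := hf x
  obtain ⟨t, rfl⟩ := hf y
  apply add_right_cancel (z := p)
  rw [← move_p, ← move_p]
  apply add_right_cancel (z := q)
  simpa only [L.zero_add, L.add_zero, ← assoc] using h L.zero s t L.zero

theorem of_comm_of_assoc (comm : ∀ x y, L.add x y = L.add y x)
    (assoc : ∀ x y z, L.add (L.add x y) z = L.add x (L.add y z)) (f : Q → Q) (p q : Q) :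
    L.Exchange f f p q := by
  have : Std.Commutative L.add := ⟨comm⟩
  have : Std.Associative L.add := ⟨assoc⟩
  intro a y u d
  ac_rfl

end Exchange

theorem exchange_iff {f g : Q → Q} (hf : f.Surjective) (hf₀ : f L.zero = L.zero)
    (hg₀ : g L.zero = L.zero) (p q : Q) :
    L.Exchange f g p q ↔
      (∀ x y, L.add x y = L.add y x) ∧
        (∀ x y z, L.add (L.add x y) z = L.add x (L.add y z)) ∧ f = g := by
  constructor
  · intro h
    have assoc := h.add_assoc hf hf₀ hg₀
    have comm := h.add_comm assoc hf hf₀ hg₀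
    refine ⟨comm, assoc, funext fun y => add_left_cancel (L := L) (x := p) ?_⟩
    rw [comm, h.map_add_eq_add_map assoc hf₀ hg₀]
  · rintro ⟨comm, assoc, rfl⟩
    exact .of_comm_of_assoc comm assoc f p q

end Loop

theorem stmt_general {Q : Type} (L : Loop Q) {φ ψ : Q → Q}
    (hφ : ∀ x y, φ (L.add x y) = L.add (φ x) (φ y)) (hφs : φ.Surjective)
    (hψ : ∀ x y, ψ (L.add x y) = L.add (ψ x) (ψ y)) (hψs : ψ.Surjective) (c : Q) :
    IsMedial (L.affine φ ψ c) ↔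
      ((∀ x y, L.add x y = L.add y x) ∧
       (∀ x y z, L.add (L.add x y) z = L.add x (L.add y z)) ∧
       φ ∘ ψ = ψ ∘ φ) := by
  have hφ₀ := Loop.map_zero_of_map_add hφ
  have hψ₀ := Loop.map_zero_of_map_add hψ
  rw [Loop.isMedial_affine_iff_exchange hφ hφs hψ hψs]
  exact Loop.exchange_iff (hφs.comp hψs) (by simp [hφ₀, hψ₀]) (by simp [hφ₀, hψ₀]) (φ c) (ψ c)

open Loop in
/-- The affine quasigroup `x*y = (φ(x)+ψ(y))+c` is medial iff `(Q,+)` is an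
abelian group and `φ∘ψ = ψ∘φ`. -/
theorem stmt {Q : Type} (L : Loop Q) (φ ψ : Q → Q) (hφ : L.IsAut φ)
    (hψ : L.IsAut ψ) (c : Q) (hc : c ∈ L.center)
    (star : Q → Q → Q) (hstar : ∀ x y, star x y = L.add (L.add (φ x) (ψ y)) c) :
    (∀ x y u v, star (star x y) (star u v) = star (star x u) (star y v)) ↔
      ((∀ x y, L.add x y = L.add y x) ∧
       (∀ x y z, L.add (L.add x y) z = L.add x (L.add y z)) ∧
       φ ∘ ψ = ψ ∘ φ) := by
  obtain rfl : star = L.affine φ ψ c := funext₂ hstar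
  exact stmt_general L hφ.2 hφ.1.2 hψ.2 hψ.1.2 c
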